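/- Assume (H1) and fix l ∈ ℝ^d; let L_l be a solution of L_l - L^*(L_l) = Σ_{i=1}^{2d} (e_i·l) A_i^* A_i - (m·l) I, and define Γ_l = Σ_{i=1}^{2d} [ A_i^* A_i (e_i·l − m·l)² + 2 (e_i·l − m·l) A_i^* L_l A_i ]. Then, with ΔM_k = Re Tr(ρ_k L_l) − Re Tr(ρ_{k-1} L_l) + (ΔX_k − m)·l the increments of the martingale associated to the quantum trajectory process (ρ_n, X_n), the normalized predictable quadratic variation converges almost surely: (1/n) Σ_{k=2}^n E[ (ΔM_k)² | F_{k-1} ] → σ_l² = Re Tr(ρ_∞ Γ_l) as n → ∞. -/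

import Mathlib

open MeasureTheory Filter Matrix Finset
open scoped ComplexOrder

noncomputable section

/-- The direction vectors `e_1, …, e_{2d}` in `ℤ^d`, with `e_{d+j} = -e_j`. -/
def dir (d : ℕ) (i : Fin (2 * d)) : Fin d → ℤ :=
  fun j => if (i : ℕ) < d then (if (j : ℕ) = (i : ℕ) then 1 else 0)
           else (if (j : ℕ) = (i : ℕ) - d then -1 else 0)

/-- The direction vectors viewed in `ℝ^d`. -/
def dirR (d : ℕ) (i : Fin (2 * d)) : Fin d → ℝ := fun j => (dir d i j : ℝ)

instance {k : ℕ} : MeasurableSpace (Matrix (Fin k) (Fin k) ℂ) := MeasurableSpace.pi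

/-- A density matrix: positive semidefinite with trace one. -/
def IsDensity {k : ℕ} (ρ : Matrix (Fin k) (Fin k) ℂ) : Prop := ρ.PosSemidef ∧ ρ.trace = 1

/-- The quantum trajectory process of the open quantum random walk. -/
structure IsQTraj {k d : ℕ} {Ω : Type} {mΩ : MeasurableSpace Ω}
    (A : Fin (2 * d) → Matrix (Fin k) (Fin k) ℂ)
    (μ : Measure Ω) (ℱ : Filtration ℕ mΩ)
    (ρ : ℕ → Ω → Matrix (Fin k) (Fin k) ℂ)
    (X : ℕ → Ω → Fin d → ℤ) : Prop where
  density : ∀ n, ∀ᵐ ω ∂μ, IsDensity (ρ n ω)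
  adapted_ρ : ∀ n, Measurable[ℱ n] (ρ n)
  adapted_X : ∀ n, Measurable[ℱ n] (X n)
  prob : ∀ (n : ℕ) (j : Fin (2 * d)),
    μ[(fun ω => if X (n + 1) ω = X n ω + dir d j then (1 : ℝ) else 0) | ℱ n]
      =ᵐ[μ] fun ω => ((A j * ρ n ω * (A j)ᴴ).trace).re
  update : ∀ (n : ℕ) (j : Fin (2 * d)), ∀ᵐ ω ∂μ,
    X (n + 1) ω = X n ω + dir d j →
      ρ (n + 1) ω = ((A j * ρ n ω * (A j)ᴴ).trace)⁻¹ • (A j * ρ n ω * (A j)ᴴ)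

/-- The drift vector `m = Σ_{i=1}^{2d} Tr(A_i ρ_∞ A_i^*) e_i ∈ ℝ^d`. -/
def mvec {k d : ℕ} (A : Fin (2 * d) → Matrix (Fin k) (Fin k) ℂ)
    (ρinf : Matrix (Fin k) (Fin k) ℂ) : Fin d → ℝ :=
  fun j => ∑ i, ((A i * ρinf * (A i)ᴴ).trace).re * dirR d i j

/-- The matrix `Γ_l = Σ_i [ (e_i·l − m·l)² A_i^* A_i + 2 (e_i·l − m·l) A_i^* L_l A_i ]`. -/
def Gammal {k d : ℕ} (A : Fin (2 * d) → Matrix (Fin k) (Fin k) ℂ)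
    (ρinf Ll : Matrix (Fin k) (Fin k) ℂ) (l : Fin d → ℝ) : Matrix (Fin k) (Fin k) ℂ :=
  ∑ i, ((((∑ j, dirR d i j * l j) - ∑ j, mvec A ρinf j * l j) ^ 2) • ((A i)ᴴ * A i) +
    (2 * ((∑ j, dirR d i j * l j) - ∑ j, mvec A ρinf j * l j)) • ((A i)ᴴ * Ll * A i))

open scoped NNReal


lemma kron (x s : ℕ → ℝ) (c : ℝ) (hs : ∀ n, s n = ∑ i ∈ range n, ((i:ℝ)+1)⁻¹ * x i)
    (h : Tendsto s atTop (nhds c)) :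
    Tendsto (fun n : ℕ => (n:ℝ)⁻¹ * ∑ i ∈ range n, x i) atTop (nhds 0) := by
  have key : ∀ n : ℕ, ∑ i ∈ range n, x i = n * s n - ∑ i ∈ range n, s i := by
    intro n
    induction n with
    | zero => simp
    | succ n ih =>
      have e : s (n+1) = s n + ((n:ℝ)+1)⁻¹ * x n := by rw [hs, hs, sum_range_succ]
      have : (n:ℝ)+1 ≠ 0 := by positivity
      rw [sum_range_succ, sum_range_succ, ih, e]; push_cast; field_simp; ring
  have h2 := h.sub h.cesaro
  rw [sub_self] at h2
  refine h2.congr' ?_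
  filter_upwards [eventually_gt_atTop 0] with n hn
  have : (n:ℝ) ≠ 0 := by positivity
  rw [key]; field_simp

lemma slln {Ω : Type} {mΩ : MeasurableSpace Ω} (μ : Measure Ω) [IsProbabilityMeasure μ]
    (ℱ : Filtration ℕ mΩ) (Y : ℕ → Ω → ℝ) (C : ℝ≥0)
    (hY : ∀ n, StronglyMeasurable[ℱ n] (Y n)) (hb : ∀ n, ∀ᵐ ω ∂μ, |Y n ω| ≤ C) :
    ∀ᵐ ω ∂μ, Tendsto (fun n : ℕ => (n:ℝ)⁻¹ *
      ∑ s ∈ range n, (Y (s+1) ω - (μ[Y (s+1) | ℱ s]) ω)) atTop (nhds 0) := by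
  set D : ℕ → Ω → ℝ := fun s => Y (s+1) - μ[Y (s+1) | ℱ s] with hD
  have hYi : ∀ n, Integrable (Y n) μ := fun n =>
    Integrable.of_bound ((hY n).mono (ℱ.le n)).aestronglyMeasurable C (hb n)
  have hDm : ∀ s, StronglyMeasurable[ℱ (s+1)] (D s) := fun s =>
    (hY _).sub (stronglyMeasurable_condExp.mono (ℱ.mono (Nat.le_succ s)))
  have hDb : ∀ s, ∀ᵐ ω ∂μ, |D s ω| ≤ 2 * C := by
    intro s
    filter_upwards [hb (s+1), ae_bdd_abs_condExp_of_ae_bdd_abs (m := ℱ s) (hb (s+1))] with ω h1 h2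
    simp only [hD, Pi.sub_apply]
    have := abs_sub (Y (s+1) ω) ((μ[Y (s+1) | ℱ s]) ω)
    linarith
  have hDi : ∀ s, Integrable (D s) μ := fun s => (hYi _).sub integrable_condExp
  have hDc : ∀ s, μ[D s | ℱ s] =ᵐ[μ] 0 := by
    intro s
    have h1 := condExp_sub (m := ℱ s) (hYi (s+1)) (integrable_condExp (m := ℱ s) (f := Y (s+1)) (μ := μ))
    rw [condExp_of_stronglyMeasurable (ℱ.le s) stronglyMeasurable_condExp integrable_condExp,
      sub_self] at h1
    exact h1
  set N : ℕ → Ω → ℝ := fun n => ∑ s ∈ range n, ((s:ℝ)+1)⁻¹ • D s with hN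
  have hNs : ∀ n, N (n+1) = N n + ((n:ℝ)+1)⁻¹ • D n := fun n => by simp [hN, sum_range_succ]
  have hNm : ∀ n, StronglyMeasurable[ℱ n] (N n) := by
    intro n
    refine Finset.stronglyMeasurable_sum _ fun s hs => ?_
    exact ((hDm s).mono (ℱ.mono (by simpa using hs))).const_smul _
  have hNb : ∀ n, ∃ K : ℝ, ∀ᵐ ω ∂μ, ‖N n ω‖ ≤ K := by
    intro n
    induction n with
    | zero => exact ⟨0, by simp [hN]⟩
    | succ n ih =>
      obtain ⟨K, hK⟩ := ih
      refine ⟨K + ((n:ℝ)+1)⁻¹ * (2 * C), ?_⟩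
      filter_upwards [hK, hDb n] with ω h1 h2
      rw [hNs]
      refine (norm_add_le _ _).trans (add_le_add h1 ?_)
      rw [Pi.smul_apply, norm_smul, Real.norm_of_nonneg (by positivity), Real.norm_eq_abs]
      gcongr
  have hNi : ∀ n, Integrable (N n) μ := fun n =>
    let ⟨K, hK⟩ := hNb n
    Integrable.of_bound ((hNm n).mono (ℱ.le n)).aestronglyMeasurable K hK
  have hNDi : ∀ n, Integrable (N n * D n) μ := fun n =>
    let ⟨K, hK⟩ := hNb n
    (hDi n).bdd_mul ((hNm n).mono (ℱ.le n)).aestronglyMeasurable hK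
  have hNNi : ∀ n, Integrable (N n * N n) μ := fun n =>
    let ⟨K, hK⟩ := hNb n
    (hNi n).bdd_mul ((hNm n).mono (ℱ.le n)).aestronglyMeasurable hK
  have hDDi : ∀ n, Integrable (D n * D n) μ := fun n =>
    (hDi n).bdd_mul ((hDm n).mono (ℱ.le _)).aestronglyMeasurable (hDb n)
  have hND : ∀ n, ∫ ω, (N n * D n) ω ∂μ = 0 := by
    intro n
    rw [← integral_condExp (ℱ.le n)]
    have h1 := condExp_mul_of_stronglyMeasurable_left (hNm n) (hNDi n) (hDi n)
    have : μ[N n * D n | ℱ n] =ᵐ[μ] 0 := by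
      filter_upwards [h1, hDc n] with ω h1 h2
      rw [h1]; simp [h2]
    rw [integral_congr_ae this]; simp
  have hDD : ∀ n, ∫ ω, (D n * D n) ω ∂μ ≤ (2*C)^2 := by
    intro n
    have : ∫ ω, (D n * D n) ω ∂μ ≤ ∫ ω, ((2*C)^2 : ℝ) ∂μ := by
      refine integral_mono_ae (hDDi n) (integrable_const _) ?_
      filter_upwards [hDb n] with ω h
      simp only [Pi.mul_apply]
      rw [← pow_two, ← sq_abs]
      gcongr
    simpa using this
  have hNN : ∀ n, ∫ ω, (N n * N n) ω ∂μ ≤ (2*C)^2 * ∑ s ∈ range n, (((s:ℝ)+1)⁻¹)^2 := by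
    intro n
    induction n with
    | zero => simp [hN]
    | succ n ih =>
      have e : N (n+1) * N (n+1) = N n * N n + ((2 * ((n:ℝ)+1)⁻¹) • (N n * D n)
          + ((((n:ℝ)+1)⁻¹)^2) • (D n * D n)) := by
        rw [hNs]; ext ω; simp only [Pi.add_apply, Pi.mul_apply, Pi.smul_apply, smul_eq_mul]; ring
      rw [e, integral_add' (hNNi n) (((hNDi n).smul _).add ((hDDi n).smul _)),
        integral_add' ((hNDi n).smul _) ((hDDi n).smul _)]
      simp only [Pi.smul_apply]
      rw [integral_smul, integral_smul, hND, sum_range_succ]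
      have := mul_le_mul_of_nonneg_left (hDD n) (sq_nonneg ((n:ℝ)+1)⁻¹)
      simp only [smul_eq_mul]
      linarith
  have hsum : Summable fun s : ℕ => (((s:ℝ)+1)⁻¹)^2 := by
    have := (summable_nat_add_iff 1).2 (Real.summable_nat_pow_inv.2 one_lt_two)
    simpa using this
  set B : ℝ := 1 + (2*C)^2 * ∑' s : ℕ, (((s:ℝ)+1)⁻¹)^2
  have hB : ∀ n, eLpNorm (N n) 1 μ ≤ (B.toNNReal : ENNReal) := by
    intro n
    rw [eLpNorm_one_eq_lintegral_enorm, ← ofReal_integral_norm_eq_lintegral_enorm (hNi n)]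
    refine ENNReal.ofReal_le_ofReal ?_
    have h1 : ∫ ω, ‖N n ω‖ ∂μ ≤ ∫ ω, ((fun _ => (1:ℝ) : Ω → ℝ) + (N n * N n)) ω ∂μ := by
      refine integral_mono (hNi n).norm ((integrable_const _).add (hNNi n)) fun ω => ?_
      simp only [Pi.add_apply, Pi.mul_apply, Real.norm_eq_abs]
      nlinarith [sq_abs (N n ω), sq_nonneg (|N n ω| - 1), abs_nonneg (N n ω)]
    rw [integral_add' (integrable_const _) (hNNi n)] at h1
    have h2 := hNN n
    have h3 : ∑ s ∈ range n, (((s:ℝ)+1)⁻¹)^2 ≤ ∑' s : ℕ, (((s:ℝ)+1)⁻¹)^2 :=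
      hsum.sum_le_tsum _ fun _ _ => by positivity
    have h4 := mul_le_mul_of_nonneg_left h3 (sq_nonneg (2*(C:ℝ)))
    simp at h1
    simp only [B, Pi.mul_apply, Real.norm_eq_abs] at *
    linarith
  have hmart : Martingale N ℱ μ := by
    refine martingale_of_condExp_sub_eq_zero_nat hNm hNi fun n => ?_
    rw [hNs, add_sub_cancel_left]
    filter_upwards [condExp_smul (((n:ℝ)+1)⁻¹) (D n) (ℱ n) (μ := μ), hDc n] with ω h1 h2
    rw [h1]; simp [h2]
  filter_upwards [hmart.submartingale.ae_tendsto_limitProcess hB] with ω h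
  refine kron (fun s => D s ω) (fun n => N n ω) _ (fun n => ?_) h
  simp [hN]

/-- `φ T ρ = Re Tr (ρ T)`. -/
def phi {k : ℕ} (T M : Matrix (Fin k) (Fin k) ℂ) : ℝ := ((M * T).trace).re

lemma phi_cont {k : ℕ} (T : Matrix (Fin k) (Fin k) ℂ) : Continuous (phi T) := by
  unfold phi
  exact Complex.continuous_re.comp (Continuous.matrix_trace (continuous_id.mul continuous_const))

lemma phi_meas {k : ℕ} (T : Matrix (Fin k) (Fin k) ℂ) : Measurable (phi T) := by
  unfold phi
  refine Complex.measurable_re.comp ?_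
  simp only [Matrix.trace, Matrix.diag, Matrix.mul_apply]
  refine Finset.measurable_sum _ fun i _ => Finset.measurable_sum _ fun j _ => ?_
  exact ((measurable_pi_apply j).comp (measurable_pi_apply i)).mul_const _

lemma density_entry {k : ℕ} {M : Matrix (Fin k) (Fin k) ℂ} (h : IsDensity M) (i j : Fin k) :
    ‖M i j‖ ≤ k := by
  obtain ⟨h1, h2⟩ := h
  obtain ⟨m, v, hv⟩ := Matrix.posSemidef_iff_eq_sum_vecMulVec.mp h1
  have ht : ∑ a : Fin m, ∑ b, ‖v a b‖^2 = 1 := by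
    have : M.trace = ((∑ a : Fin m, ∑ b, ‖v a b‖^2 : ℝ) : ℂ) := by
      rw [hv, Matrix.trace_sum]
      push_cast
      refine Finset.sum_congr rfl fun a _ => ?_
      simp only [Matrix.trace, Matrix.diag, Matrix.vecMulVec_apply, Pi.star_apply]
      refine Finset.sum_congr rfl fun b _ => ?_
      exact Complex.mul_conj' _
    rw [h2] at this
    exact_mod_cast this.symm
  have hk : (1:ℝ) ≤ k := by
    have := i.pos
    exact_mod_cast this
  refine le_trans ?_ hk
  rw [hv, ← ht, Matrix.sum_apply]
  refine (norm_sum_le _ _).trans (Finset.sum_le_sum fun a _ => ?_)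
  rw [Matrix.vecMulVec_apply, norm_mul, Pi.star_apply, norm_star]
  have hi := Finset.single_le_sum (f := fun b => ‖v a b‖^2) (fun b _ => by positivity) (Finset.mem_univ i)
  have hj := Finset.single_le_sum (f := fun b => ‖v a b‖^2) (fun b _ => by positivity) (Finset.mem_univ j)
  nlinarith [sq_nonneg (‖v a i‖ - ‖v a j‖)]

lemma density_compact (k : ℕ) : IsCompact {M : Matrix (Fin k) (Fin k) ℂ | IsDensity M} := by
  have hK : IsCompact (Set.univ.pi fun _ : Fin k => Set.univ.pi fun _ : Fin k =>
      Metric.closedBall (0:ℂ) k) :=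
    isCompact_univ_pi fun _ => isCompact_univ_pi fun _ => isCompact_closedBall _ _
  refine IsCompact.of_isClosed_subset hK ?_ ?_
  · have : {M : Matrix (Fin k) (Fin k) ℂ | IsDensity M} =
        ({M | Mᴴ = M} ∩ ⋂ x : Fin k → ℂ, {M | 0 ≤ star x ⬝ᵥ (M *ᵥ x)}) ∩ {M | M.trace = 1} := by
      ext M
      simp [IsDensity, Matrix.posSemidef_iff_dotProduct_mulVec, Matrix.IsHermitian]
    rw [this]
    refine ((isClosed_eq (by fun_prop) (by fun_prop)).inter (isClosed_iInter fun x => ?_)).inter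
      (isClosed_eq (by fun_prop) (by fun_prop))
    exact isClosed_le continuous_const
      (continuous_const.dotProduct (continuous_id.matrix_mulVec continuous_const))
  · intro M hM i _ j _
    simpa using density_entry hM i j

lemma phi_bdd {k : ℕ} (T : Matrix (Fin k) (Fin k) ℂ) :
    ∃ C : ℝ≥0, ∀ M, IsDensity M → |phi T M| ≤ C := by
  obtain ⟨C, hC⟩ := (density_compact k).exists_bound_of_continuousOn (phi_cont T).continuousOn
  exact ⟨C.toNNReal, fun M hM => (hC M hM).trans (Real.le_coe_toNNReal _)⟩

lemma phi_add {k : ℕ} (T M N : Matrix (Fin k) (Fin k) ℂ) : phi T (M + N) = phi T M + phi T N := by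
  simp [phi, add_mul]
lemma phi_sub {k : ℕ} (T M N : Matrix (Fin k) (Fin k) ℂ) : phi T (M - N) = phi T M - phi T N := by
  simp [phi, sub_mul]
lemma phi_smul {k : ℕ} (T M : Matrix (Fin k) (Fin k) ℂ) (c : ℝ) : phi T (c • M) = c * phi T M := by
  simp [phi]
lemma phi_sum {k : ℕ} {ι : Type} (s : Finset ι) (T : Matrix (Fin k) (Fin k) ℂ)
    (M : ι → Matrix (Fin k) (Fin k) ℂ) : phi T (∑ i ∈ s, M i) = ∑ i ∈ s, phi T (M i) := by
  simp [phi, Finset.sum_mul, Matrix.trace_sum]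
lemma phi_add' {k : ℕ} (T M N : Matrix (Fin k) (Fin k) ℂ) : phi (T + N) M = phi T M + phi N M := by
  simp [phi, mul_add]
lemma phi_sub' {k : ℕ} (T M N : Matrix (Fin k) (Fin k) ℂ) : phi (T - N) M = phi T M - phi N M := by
  simp [phi, mul_sub]
lemma phi_smul' {k : ℕ} (T M : Matrix (Fin k) (Fin k) ℂ) (c : ℝ) : phi (c • T) M = c * phi T M := by
  simp [phi]
lemma phi_sum' {k : ℕ} {ι : Type} (s : Finset ι) (M : Matrix (Fin k) (Fin k) ℂ)
    (T : ι → Matrix (Fin k) (Fin k) ℂ) : phi (∑ i ∈ s, T i) M = ∑ i ∈ s, phi (T i) M := by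
  simp [phi, Finset.mul_sum, Matrix.trace_sum]
lemma phi_conj {k : ℕ} (A T M : Matrix (Fin k) (Fin k) ℂ) :
    phi T (A * M * Aᴴ) = phi (Aᴴ * T * A) M := by
  unfold phi
  rw [Matrix.mul_assoc, Matrix.mul_assoc, Matrix.trace_mul_comm]
  simp only [Matrix.mul_assoc]
lemma phi_one {k : ℕ} {M : Matrix (Fin k) (Fin k) ℂ} (h : IsDensity M) : phi 1 M = 1 := by
  simp [phi, h.2]

/-- test functionals -/
def tst {k : ℕ} (p : Fin k × Fin k × Bool) : Matrix (Fin k) (Fin k) ℂ :=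
  Matrix.single p.1 p.2.1 (if p.2.2 then 1 else Complex.I)

lemma eq_zero_of_tst {k : ℕ} (M : Matrix (Fin k) (Fin k) ℂ) (h : ∀ p, phi (tst p) M = 0) :
    M = 0 := by
  ext a b
  have h1 := h (b, a, true)
  have h2 := h (b, a, false)
  simp [phi, tst, Matrix.trace_mul_single] at h1 h2
  exact Complex.ext (by simpa using h1) (by simpa using h2)

lemma density_avg {k : ℕ} (r : ℕ → Matrix (Fin k) (Fin k) ℂ) (hr : ∀ n, IsDensity (r n)) (n : ℕ)
    (hn : 0 < n) : IsDensity ((n:ℝ)⁻¹ • ∑ s ∈ range n, r s) := by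
  constructor
  · have : (∑ s ∈ range n, r s).PosSemidef := Matrix.posSemidef_sum _ fun i _ => (hr i).1
    have h2 := this.smul (a := ((n:ℝ)⁻¹ : ℝ)) (by positivity)
    exact h2
  · simp only [Matrix.trace_smul, Matrix.trace_sum, (hr _).2]
    simp
    have : (n:ℂ) ≠ 0 := by exact_mod_cast hn.ne'
    field_simp

lemma cesaro_det {k d : ℕ} (A : Fin (2 * d) → Matrix (Fin k) (Fin k) ℂ)
    (ρinf : Matrix (Fin k) (Fin k) ℂ)
    (huniq : ∀ σ, IsDensity σ → (∑ j, A j * σ * (A j)ᴴ) = σ → σ = ρinf)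
    (r : ℕ → Matrix (Fin k) (Fin k) ℂ) (hr : ∀ n, IsDensity (r n))
    (h : ∀ p : Fin k × Fin k × Bool, Tendsto (fun n : ℕ => (n:ℝ)⁻¹ * ∑ s ∈ range n,
      (phi (tst p) (r (s+1)) - phi (tst p) (∑ j, A j * r s * (A j)ᴴ))) atTop (nhds 0)) :
    Tendsto (fun n : ℕ => (n:ℝ)⁻¹ • ∑ s ∈ range n, r s) atTop (nhds ρinf) := by
  refine (density_compact k).tendsto_nhds_of_unique_mapClusterPt ?_ ?_
  · filter_upwards [eventually_gt_atTop 0] with n hn using density_avg r hr n hn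
  intro x hx hc
  refine huniq x hx ?_
  set R : ℕ → Matrix (Fin k) (Fin k) ℂ := fun n => (n:ℝ)⁻¹ • ∑ s ∈ range n, r s with hR
  refine (sub_eq_zero.1 (eq_zero_of_tst (x - ∑ j, A j * x * (A j)ᴴ) fun p => ?_)).symm
  set g : Matrix (Fin k) (Fin k) ℂ → ℝ := fun M => phi (tst p) (M - ∑ j, A j * M * (A j)ᴴ) with hg
  have gc : Continuous g := (phi_cont _).comp (by fun_prop)
  have h1 : MapClusterPt (g x) atTop (g ∘ R) := hc.continuousAt_comp gc.continuousAt
  have h2 : Tendsto (g ∘ R) atTop (nhds 0) := by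
    obtain ⟨C, hC⟩ := phi_bdd (tst p)
    have h3 : Tendsto (fun n : ℕ => (n:ℝ)⁻¹ * (phi (tst p) (r 0) - phi (tst p) (r n)))
        atTop (nhds 0) := by
      have : Tendsto (fun n : ℕ => (n:ℝ)⁻¹ * (2 * C)) atTop (nhds 0) := by
        simpa using (tendsto_inv_atTop_nhds_zero_nat (𝕜 := ℝ)).mul_const (2 * (C:ℝ))
      refine squeeze_zero_norm (fun n => ?_) this
      rw [norm_mul, Real.norm_of_nonneg (by positivity), Real.norm_eq_abs]
      gcongr
      have := abs_sub (phi (tst p) (r 0)) (phi (tst p) (r n))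
      linarith [hC _ (hr 0), hC _ (hr n)]
    have h4 := (h p).add h3
    rw [add_zero] at h4
    refine h4.congr fun n => ?_
    simp only [hg, hR, Function.comp]
    rw [phi_sub, phi_smul, phi_sum, phi_sum]
    simp only [phi_conj, phi_smul, phi_sum]
    rw [← mul_add, ← Finset.mul_sum, ← mul_sub, Finset.sum_sub_distrib, Finset.sum_comm]
    congr 1
    have := Finset.sum_range_sub (fun s => phi (tst p) (r s)) n
    rw [Finset.sum_sub_distrib] at this
    linarith
  have h5 : Tendsto (g ∘ R) atTop (nhds 0) := h2
  by_contra hne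
  have := h1.clusterPt
  have h6 : ClusterPt (g x) (nhds 0) := ClusterPt.mono this h5
  exact hne (eq_of_nhds_neBot h6)

lemma dir_inj (d : ℕ) (i i' : Fin (2 * d)) (h : dir d i = dir d i') : i = i' := by
  have hi := i.2
  have hi' := i'.2
  apply Fin.ext
  by_cases h1 : (i:ℕ) < d
  · have := congrFun h ⟨i, h1⟩
    simp only [dir] at this
    split_ifs at this <;> omega
  · have := congrFun h ⟨i - d, by omega⟩
    simp only [dir] at this
    split_ifs at this <;> omega

section
variable {k d : ℕ} {Ω : Type} {mΩ : MeasurableSpace Ω}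
    {A : Fin (2 * d) → Matrix (Fin k) (Fin k) ℂ}
    {μ : Measure Ω} [IsProbabilityMeasure μ]
    {ℱ : Filtration ℕ mΩ}
    {ρ : ℕ → Ω → Matrix (Fin k) (Fin k) ℂ} {X : ℕ → Ω → Fin d → ℤ}

/-- Indicator of the `j`-th jump. -/
def ind (X : ℕ → Ω → Fin d → ℤ) (n : ℕ) (j : Fin (2 * d)) : Ω → ℝ :=
  fun ω => if X (n + 1) ω = X n ω + dir d j then (1 : ℝ) else 0

/-- Jump indicator times functional. -/
def If (X : ℕ → Ω → Fin d → ℤ) (ρ : ℕ → Ω → Matrix (Fin k) (Fin k) ℂ) (n : ℕ) (j : Fin (2 * d))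
    (T : Matrix (Fin k) (Fin k) ℂ) : Ω → ℝ :=
  fun ω => ind X n j ω * phi T (ρ (n+1) ω)

lemma ind_le (n : ℕ) (j : Fin (2 * d)) (ω : Ω) : ‖ind X n j ω‖ ≤ 1 := by
  unfold ind; split_ifs <;> simp

lemma ind_meas (hQT : IsQTraj A μ ℱ ρ X) (n : ℕ) (j : Fin (2 * d)) :
    Measurable (ind X n j) := by
  have h1 : Measurable (X (n+1)) := (hQT.adapted_X (n+1)).mono (ℱ.le _) le_rfl
  have h0 : Measurable (X n) := (hQT.adapted_X n).mono (ℱ.le _) le_rfl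
  refine Measurable.ite ?_ measurable_const measurable_const
  exact measurableSet_eq_fun h1 (h0.add_const _)

lemma ind_int (hQT : IsQTraj A μ ℱ ρ X) (n : ℕ) (j : Fin (2 * d)) : Integrable (ind X n j) μ :=
  Integrable.of_bound (ind_meas hQT n j).aestronglyMeasurable 1 (ae_of_all _ (ind_le n j))

lemma phi_sm (hQT : IsQTraj A μ ℱ ρ X) (n : ℕ) (T : Matrix (Fin k) (Fin k) ℂ) :
    StronglyMeasurable[ℱ n] (fun ω => phi T (ρ n ω)) :=
  ((phi_meas T).comp (hQT.adapted_ρ n)).stronglyMeasurable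

lemma phi_ae_bdd (hQT : IsQTraj A μ ℱ ρ X) (T : Matrix (Fin k) (Fin k) ℂ) :
    ∃ C : ℝ≥0, ∀ n, ∀ᵐ ω ∂μ, |phi T (ρ n ω)| ≤ C := by
  obtain ⟨C, hC⟩ := phi_bdd T
  exact ⟨C, fun n => (hQT.density n).mono fun ω h => hC _ h⟩

lemma phi_int (hQT : IsQTraj A μ ℱ ρ X) (n : ℕ) (T : Matrix (Fin k) (Fin k) ℂ) :
    Integrable (fun ω => phi T (ρ n ω)) μ := by
  obtain ⟨C, hC⟩ := phi_ae_bdd hQT T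
  exact Integrable.of_bound ((phi_sm hQT n T).mono (ℱ.le n)).aestronglyMeasurable C (hC n)

lemma If_int (hQT : IsQTraj A μ ℱ ρ X) (n : ℕ) (j : Fin (2 * d)) (T : Matrix (Fin k) (Fin k) ℂ) :
    Integrable (If X ρ n j T) μ :=
  (phi_int hQT (n+1) T).bdd_mul (ind_meas hQT n j).aestronglyMeasurable (ae_of_all _ (ind_le n j))

lemma density_conj {M B : Matrix (Fin k) (Fin k) ℂ} (h : IsDensity M) :
    (B * M * Bᴴ).PosSemidef := h.1.mul_mul_conjTranspose_same B

lemma phi_conj_one (B M : Matrix (Fin k) (Fin k) ℂ) :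
    ((B * M * Bᴴ).trace).re = phi (Bᴴ * B) M := by
  have := phi_conj B 1 M
  simpa [phi] using this

lemma cond_If (hQT : IsQTraj A μ ℱ ρ X) (n : ℕ) (j : Fin (2 * d))
    (T : Matrix (Fin k) (Fin k) ℂ) :
    μ[If X ρ n j T | ℱ n] =ᵐ[μ] fun ω => phi ((A j)ᴴ * T * A j) (ρ n ω) := by
  set h : Ω → ℝ := fun ω => (phi ((A j)ᴴ * A j) (ρ n ω))⁻¹ * phi ((A j)ᴴ * T * A j) (ρ n ω) with hh
  have hm : StronglyMeasurable[ℱ n] h := by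
    refine Measurable.stronglyMeasurable ?_
    exact (phi_sm hQT n _).measurable.inv.mul (phi_sm hQT n _).measurable
  have hreal : ∀ ω, IsDensity (ρ n ω) →
      (A j * ρ n ω * (A j)ᴴ).trace = ((phi ((A j)ᴴ * A j) (ρ n ω) : ℝ) : ℂ) := by
    intro ω hω
    have := (density_conj (B := A j) hω).trace_nonneg
    rw [← phi_conj_one]
    exact Complex.eq_re_of_ofReal_le this
  have e : If X ρ n j T =ᵐ[μ] h * ind X n j := by
    filter_upwards [hQT.update n j, hQT.density n] with ω h1 h2
    simp only [If, ind, Pi.mul_apply]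
    split_ifs with hc
    · rw [h1 hc, hreal ω h2, ← Complex.ofReal_inv, one_mul, mul_one]
      have := phi_smul T (A j * ρ n ω * (A j)ᴴ) (phi ((A j)ᴴ * A j) (ρ n ω))⁻¹
      rw [phi_conj] at this
      simp only [hh]
      rw [← this]
      rfl
    · simp
  have h1 := condExp_mul_of_stronglyMeasurable_left hm ((If_int hQT n j T).congr e) (ind_int hQT n j)
  filter_upwards [condExp_congr_ae (m := ℱ n) e, h1, hQT.prob n j, hQT.density n] with ω a1 a2 a3 a4
  rw [a1, a2, Pi.mul_apply]
  have a3' : μ[ind X n j | ℱ n] ω = phi ((A j)ᴴ * A j) (ρ n ω) := by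
    rw [← phi_conj_one]; exact a3
  rw [a3']
  by_cases hz : phi ((A j)ᴴ * A j) (ρ n ω) = 0
  · have : A j * ρ n ω * (A j)ᴴ = 0 := by
      rw [← (density_conj a4).trace_eq_zero_iff, hreal ω a4, hz]; simp
    rw [hz, ← phi_conj, this]
    simp [phi]
  · simp only [hh]; field_simp

lemma cond_lin (hQT : IsQTraj A μ ℱ ρ X) (n : ℕ)
    (T : Fin (2 * d) → Matrix (Fin k) (Fin k) ℂ) :
    μ[∑ j, If X ρ n j (T j) | ℱ n] =ᵐ[μ]
      fun ω => phi (∑ j, (A j)ᴴ * T j * A j) (ρ n ω) := by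
  have h1 := condExp_finsetSum (s := Finset.univ) (fun j _ => If_int hQT n j (T j)) (ℱ n)
  have h2 := ae_all_iff.2 fun j => cond_If hQT n j (T j)
  filter_upwards [h1, h2] with ω a1 a2
  rw [a1, Finset.sum_apply, phi_sum']
  exact Finset.sum_congr rfl fun j _ => a2 j

lemma ind_ne (n : ℕ) (j i : Fin (2 * d)) (ω : Ω) (h : X (n+1) ω = X n ω + dir d j) :
    ind X n i ω = if i = j then 1 else 0 := by
  unfold ind
  congr 1
  rw [h]
  simp only [add_right_inj, eq_iff_iff]
  exact ⟨fun h => (dir_inj d _ _ h).symm, fun h => by rw [h]⟩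

lemma ae_jump (hA : ∑ j, (A j)ᴴ * A j = 1) (hQT : IsQTraj A μ ℱ ρ X) (n : ℕ) :
    ∀ᵐ ω ∂μ, ∃ j, X (n+1) ω = X n ω + dir d j := by
  set S : Ω → ℝ := fun ω => 1 - ∑ j, ind X n j ω with hS
  have hSi' : Integrable (fun ω => ∑ j, ind X n j ω) μ :=
    integrable_finsetSum _ fun j _ => ind_int hQT n j
  have hSi : Integrable S μ := (integrable_const _).sub hSi'
  have hS0 : 0 ≤ S := by
    intro ω
    simp only [hS, Pi.zero_apply]
    by_cases h : ∃ j, X (n+1) ω = X n ω + dir d j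
    · obtain ⟨j, hj⟩ := h
      simp [ind_ne n j _ ω hj]
    · push Not at h
      simp [ind, h]
  have hint : ∫ ω, S ω ∂μ = 0 := by
    simp only [hS]
    rw [integral_sub (integrable_const _) hSi', integral_finsetSum _ fun j _ => ind_int hQT n j]
    have : ∀ j, ∫ ω, ind X n j ω ∂μ = ∫ ω, phi ((A j)ᴴ * A j) (ρ n ω) ∂μ := by
      intro j
      rw [← integral_condExp (ℱ.le n)]
      refine integral_congr_ae ?_
      filter_upwards [hQT.prob n j] with ω h
      rw [← phi_conj_one]; exact h
    simp only [this]
    rw [← integral_finsetSum _ fun j _ => phi_int hQT n _]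
    simp only [← phi_sum', hA]
    have : ∫ ω, phi 1 (ρ n ω) ∂μ = ∫ ω, (1:ℝ) ∂μ :=
      integral_congr_ae ((hQT.density n).mono fun ω h => phi_one h)
    rw [this]; simp
  have := (integral_eq_zero_iff_of_nonneg hS0 hSi).1 hint
  filter_upwards [this] with ω h
  by_contra hc
  push Not at hc
  simp [hS, ind, hc] at h

lemma cond_phi (hA : ∑ j, (A j)ᴴ * A j = 1) (hQT : IsQTraj A μ ℱ ρ X) (n : ℕ)
    (T : Matrix (Fin k) (Fin k) ℂ) :
    μ[fun ω => phi T (ρ (n+1) ω) | ℱ n] =ᵐ[μ] fun ω => phi T (∑ j, A j * ρ n ω * (A j)ᴴ) := by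
  have e : (fun ω => phi T (ρ (n+1) ω)) =ᵐ[μ] ∑ j, If X ρ n j T := by
    filter_upwards [ae_jump hA hQT n] with ω ⟨j, hj⟩
    simp [If, ind_ne n j _ ω hj]
  filter_upwards [condExp_congr_ae (m := ℱ n) e, cond_lin hQT n (fun _ => T)] with ω a1 a2
  rw [a1, a2, phi_sum, phi_sum']
  simp only [phi_conj]

lemma cesaro_ae (hA : ∑ j, (A j)ᴴ * A j = 1) (hQT : IsQTraj A μ ℱ ρ X)
    (ρinf : Matrix (Fin k) (Fin k) ℂ)
    (huniq : ∀ σ, IsDensity σ → (∑ j, A j * σ * (A j)ᴴ) = σ → σ = ρinf) :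
    ∀ᵐ ω ∂μ, Tendsto (fun n : ℕ => (n:ℝ)⁻¹ • ∑ s ∈ range n, ρ s ω) atTop (nhds ρinf) := by
  have h1 : ∀ p : Fin k × Fin k × Bool, ∀ᵐ ω ∂μ, Tendsto (fun n : ℕ => (n:ℝ)⁻¹ * ∑ s ∈ range n,
      (phi (tst p) (ρ (s+1) ω) - phi (tst p) (∑ j, A j * ρ s ω * (A j)ᴴ))) atTop (nhds 0) := by
    intro p
    obtain ⟨C, hC⟩ := phi_ae_bdd hQT (tst p)
    have h2 := slln μ ℱ (fun n ω => phi (tst p) (ρ n ω)) C (fun n => phi_sm hQT n _) hC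
    filter_upwards [h2, ae_all_iff.2 fun n => cond_phi hA hQT n (tst p)] with ω a1 a2
    simpa only [a2] using a1
  filter_upwards [ae_all_iff.2 h1, ae_all_iff.2 hQT.density] with ω a1 a2
  exact cesaro_det A ρinf huniq (fun n => ρ n ω) a2 a1

lemma cond_DM (hA : ∑ j, (A j)ᴴ * A j = 1) (hQT : IsQTraj A μ ℱ ρ X)
    (ρinf : Matrix (Fin k) (Fin k) ℂ)
    (l : Fin d → ℝ) (Ll : Matrix (Fin k) (Fin k) ℂ)
    (hLl : Ll - (∑ i, (A i)ᴴ * Ll * A i) =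
      (∑ i, (∑ j, dirR d i j * l j) • ((A i)ᴴ * A i)) -
        (∑ j, mvec A ρinf j * l j) • (1 : Matrix (Fin k) (Fin k) ℂ))
    (DM : ℕ → Ω → ℝ)
    (hDM : ∀ (s : ℕ) (ω : Ω), DM s ω =
      ((ρ s ω * Ll).trace).re - ((ρ (s - 1) ω * Ll).trace).re +
        ∑ j, (((X s ω j - X (s - 1) ω j : ℤ) : ℝ) - mvec A ρinf j) * l j) (n : ℕ) :
    μ[fun ω => (DM (n+1) ω)^2 | ℱ n] =ᵐ[μ] fun ω =>
      (μ[fun ω => (phi Ll (ρ (n+1) ω))^2 | ℱ n]) ω - (phi Ll (ρ n ω))^2 +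
        phi (Gammal A ρinf Ll l) (ρ n ω) := by
  set c : Fin (2 * d) → ℝ := fun i => (∑ j, dirR d i j * l j) - ∑ j, mvec A ρinf j * l j with hc
  set P : Ω → ℝ := ∑ j, If X ρ n j ((c j)^2 • 1 + (2 * c j) • Ll) with hP
  set Q : Ω → ℝ := ∑ j, If X ρ n j (Ll + c j • 1) with hQ
  set F : Ω → ℝ := fun ω => phi Ll (ρ n ω) with hF
  set G : Ω → ℝ := fun ω => (phi Ll (ρ (n+1) ω))^2 with hG
  obtain ⟨C, hC⟩ := phi_ae_bdd hQT Ll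
  have hFm : StronglyMeasurable[ℱ n] F := phi_sm hQT n Ll
  have hFi : Integrable F μ := phi_int hQT n Ll
  have hFFi : Integrable (F * F) μ :=
    hFi.bdd_mul (hFm.mono (ℱ.le n)).aestronglyMeasurable (hC n)
  have hGi : Integrable G μ := by
    have := (phi_int hQT (n+1) Ll).bdd_mul
      ((phi_sm hQT (n+1) Ll).mono (ℱ.le _)).aestronglyMeasurable (hC (n+1))
    refine this.congr (ae_of_all _ fun ω => ?_)
    simp only [hG]; ring
  have hPi : Integrable P μ := integrable_finsetSum' _ fun j _ => If_int hQT n j _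
  have hQi : Integrable Q μ := integrable_finsetSum' _ fun j _ => If_int hQT n j _
  have hFQi : Integrable (F * Q) μ :=
    hQi.bdd_mul (hFm.mono (ℱ.le n)).aestronglyMeasurable (hC n)
  have e : (fun ω => (DM (n+1) ω)^2) =ᵐ[μ] (G + P) - ((2:ℝ) • (F * Q) - F * F) := by
    filter_upwards [ae_jump hA hQT n, hQT.density (n+1)] with ω ⟨j, hj⟩ hd
    have hx : ∑ i, (((X (n+1) ω i - X n ω i : ℤ) : ℝ) - mvec A ρinf i) * l i = c j := by
      simp only [hc, hj, ← Finset.sum_sub_distrib]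
      refine Finset.sum_congr rfl fun i _ => ?_
      simp [dirR]; ring
    have hPω : P ω = (c j)^2 + 2 * c j * phi Ll (ρ (n+1) ω) := by
      simp [hP, If, ind_ne n j _ ω hj, phi_add', phi_smul', phi_one hd]
    have hQω : Q ω = phi Ll (ρ (n+1) ω) + c j := by
      simp [hQ, If, ind_ne n j _ ω hj, phi_add', phi_smul', phi_one hd]
    rw [hDM]
    simp only [Nat.add_sub_cancel, Pi.sub_apply, Pi.add_apply, Pi.smul_apply, Pi.mul_apply,
      smul_eq_mul]
    rw [hx, hPω, hQω]
    change (phi Ll (ρ (n+1) ω) - F ω + c j)^2 = _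
    simp only [hG]
    ring
  have hL : ∑ j, (A j)ᴴ * (Ll + c j • 1) * A j = Ll := by
    have h1 : ∑ j, (A j)ᴴ * (Ll + c j • 1) * A j = ∑ j, (A j)ᴴ * Ll * A j +
        ((∑ i, (∑ j, dirR d i j * l j) • ((A i)ᴴ * A i)) -
        (∑ j, mvec A ρinf j * l j) • (1 : Matrix (Fin k) (Fin k) ℂ)) := by
      rw [← hA, Finset.smul_sum, ← Finset.sum_sub_distrib, ← Finset.sum_add_distrib]
      refine Finset.sum_congr rfl fun j _ => ?_
      rw [← sub_smul, mul_add, add_mul]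
      simp [hc, hA]
    rw [h1, ← hLl]; abel
  have hGam : ∑ j, (A j)ᴴ * ((c j)^2 • 1 + (2 * c j) • Ll) * A j = Gammal A ρinf Ll l := by
    unfold Gammal
    refine Finset.sum_congr rfl fun j _ => ?_
    rw [mul_add, add_mul]
    simp only [Matrix.mul_smul, Matrix.smul_mul, mul_one, hc]
  have hp := cond_lin hQT n (fun j => (c j)^2 • 1 + (2 * c j) • Ll)
  have hq := cond_lin hQT n (fun j => Ll + c j • 1)
  rw [hGam] at hp
  rw [hL] at hq
  have b1 := condExp_sub (hGi.add hPi) ((hFQi.smul (2:ℝ)).sub hFFi) (ℱ n)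
  have b2 := condExp_add hGi hPi (ℱ n)
  have b3 := condExp_sub (hFQi.smul (2:ℝ)) hFFi (ℱ n)
  have b4 := condExp_smul (2:ℝ) (F * Q) (ℱ n) (μ := μ)
  have b5 := condExp_mul_of_stronglyMeasurable_left hFm hFQi hQi
  have b6 := condExp_of_stronglyMeasurable (ℱ.le n) (hFm.mul hFm) hFFi
  filter_upwards [condExp_congr_ae (m := ℱ n) e, b1, b2, b3, b4, b5, hp, hq]
    with ω a0 a1 a2 a3 a4 a5 a6 a7
  rw [a0, a1, Pi.sub_apply, a2, Pi.add_apply, a3, Pi.sub_apply, a4, Pi.smul_apply, a5,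
    Pi.mul_apply, b6, a6, a7]
  simp only [hF, hG, Pi.mul_apply, smul_eq_mul]
  ring
end

/-- The normalized predictable quadratic variation of the martingale
converges almost surely: `(1/n) Σ_{k=2}^n E[(ΔM_k)² | F_{k-1}] → σ_l² = Re Tr(ρ_∞ Γ_l)`. -/
theorem stmt11 {k d : ℕ} (hd : 1 ≤ d)
    (A : Fin (2 * d) → Matrix (Fin k) (Fin k) ℂ)
    (hA : ∑ j, (A j)ᴴ * A j = 1)
    (ρinf : Matrix (Fin k) (Fin k) ℂ) (hρinf : IsDensity ρinf)
    (hinv : (∑ j, A j * ρinf * (A j)ᴴ) = ρinf)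
    (huniq : ∀ σ, IsDensity σ → (∑ j, A j * σ * (A j)ᴴ) = σ → σ = ρinf)
    (l : Fin d → ℝ) (Ll : Matrix (Fin k) (Fin k) ℂ)
    (hLl : Ll - (∑ i, (A i)ᴴ * Ll * A i) =
      (∑ i, (∑ j, dirR d i j * l j) • ((A i)ᴴ * A i)) -
        (∑ j, mvec A ρinf j * l j) • (1 : Matrix (Fin k) (Fin k) ℂ))
    {Ω : Type} {mΩ : MeasurableSpace Ω} (μ : Measure Ω) [IsProbabilityMeasure μ]
    (ℱ : Filtration ℕ mΩ)
    (ρ : ℕ → Ω → Matrix (Fin k) (Fin k) ℂ) (X : ℕ → Ω → Fin d → ℤ)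
    (hQT : IsQTraj A μ ℱ ρ X)
    (DM : ℕ → Ω → ℝ)
    (hDM : ∀ (s : ℕ) (ω : Ω), DM s ω =
      ((ρ s ω * Ll).trace).re - ((ρ (s - 1) ω * Ll).trace).re +
        ∑ j, (((X s ω j - X (s - 1) ω j : ℤ) : ℝ) - mvec A ρinf j) * l j) :
    ∀ᵐ ω ∂μ,
      Tendsto
        (fun n : ℕ =>
          (n : ℝ)⁻¹ * ∑ s ∈ Finset.Icc 2 n, (μ[fun ω' => (DM s ω') ^ 2 | ℱ (s - 1)]) ω)
        atTop (nhds (((ρinf * Gammal A ρinf Ll l).trace).re)) := by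
  have hc := ae_all_iff.2 fun n => cond_DM hA hQT ρinf l Ll hLl DM hDM n
  obtain ⟨C, hC⟩ := phi_ae_bdd hQT Ll
  have hs := slln μ ℱ (fun n ω => (phi Ll (ρ n ω))^2) (C^2) (fun n => (phi_sm hQT n Ll).pow 2)
    (fun n => (hC n).mono fun ω h => by
      rw [abs_pow]; push_cast; gcongr)
  filter_upwards [hc, hs, cesaro_ae hA hQT ρinf huniq, ae_all_iff.2 hC] with ω a1 a2 a3 a4
  have hg := (phi_cont (Gammal A ρinf Ll l)).continuousAt.tendsto.comp a3
  have ht : Tendsto (fun n : ℕ => (n:ℝ)⁻¹ * ((phi Ll (ρ n ω))^2 - (phi Ll (ρ 0 ω))^2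
      - (μ[fun ω' => (DM 1 ω')^2 | ℱ 0]) ω)) atTop (nhds 0) := by
    set K := (μ[fun ω' => (DM 1 ω')^2 | ℱ 0]) ω
    have : Tendsto (fun n : ℕ => (n:ℝ)⁻¹ * (2 * (C:ℝ)^2 + |K|)) atTop (nhds 0) := by
      simpa using (tendsto_inv_atTop_nhds_zero_nat (𝕜 := ℝ)).mul_const (2 * (C:ℝ)^2 + |K|)
    refine squeeze_zero_norm (fun n => ?_) this
    rw [norm_mul, Real.norm_of_nonneg (by positivity), Real.norm_eq_abs]
    gcongr
    have h1 := abs_sub ((phi Ll (ρ n ω))^2 - (phi Ll (ρ 0 ω))^2) K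
    have h2 := abs_sub ((phi Ll (ρ n ω))^2) ((phi Ll (ρ 0 ω))^2)
    have h3 : |(phi Ll (ρ n ω))^2| ≤ (C:ℝ)^2 := by rw [abs_pow]; gcongr; exact a4 n
    have h4 : |(phi Ll (ρ 0 ω))^2| ≤ (C:ℝ)^2 := by rw [abs_pow]; gcongr; exact a4 0
    linarith
  have h := (ht.sub a2).add hg
  rw [sub_zero, zero_add] at h
  refine h.congr' ?_
  filter_upwards [eventually_gt_atTop 0] with n hn
  simp only [Function.comp]
  rw [phi_smul, phi_sum, ← mul_sub, ← mul_add]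
  congr 1
  have hI : ∑ s ∈ Finset.Icc 2 n, (μ[fun ω' => (DM s ω') ^ 2 | ℱ (s - 1)]) ω
      = ∑ s ∈ range n, (μ[fun ω' => (DM (s+1) ω') ^ 2 | ℱ s]) ω
        - (μ[fun ω' => (DM 1 ω')^2 | ℱ 0]) ω := by
    obtain ⟨m, rfl⟩ : ∃ m, n = m + 1 := ⟨n - 1, by omega⟩
    rw [Finset.sum_range_succ', ← Finset.Ico_succ_right_eq_Icc, Finset.sum_Ico_eq_sum_range]
    simp only [zero_add, add_sub_cancel_right]
    refine Finset.sum_congr (by simp) fun s _ => ?_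
    have e1 : 2 + s - 1 = s + 1 := by omega
    have e2 : 2 + s = s + 1 + 1 := by omega
    rw [e1, e2]
  rw [hI, Finset.sum_congr rfl fun s _ => a1 s]
  have := Finset.sum_range_sub (fun s => (phi Ll (ρ s ω))^2) n
  simp only [Finset.sum_sub_distrib, Finset.sum_add_distrib] at this ⊢
  linarith
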